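/- Let f be a smooth (0,2)-tensor field on V which is antisymmetric (f_{jk} = −f_{kj}) and satisfies the Killing–Yano equation ∇_i f_{jk} + ∇_j f_{ik} = 0 for all i,j,k. Define the symmetric (0,2)-tensor field K by K_{ij} := ∑_{k,l} f_{ik} g^{kl} f_{lj}. Then K satisfies the Killing equation: ∇_i K_{jk} + ∇_j K_{ki} + ∇_k K_{ij} = 0 for all i,j,k. -/

import Mathlib

noncomputable section

/-- Partial derivative in the i-th coordinate direction of ℝⁿ. -/
def pd {n : ℕ} (i : Fin n) (f : (Fin n → ℝ) → ℝ) (x : Fin n → ℝ) : ℝ :=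
  fderiv ℝ f x (Pi.single i 1)

/-- Christoffel symbols Γ^i_{jk} := (1/2)∑_l g^{il}(∂_j g_{lk} + ∂_k g_{jl} − ∂_l g_{jk})
of the metric `g` with pointwise inverse `ginv`. -/
def christoffel {n : ℕ} (g ginv : (Fin n → ℝ) → Fin n → Fin n → ℝ)
    (i j k : Fin n) (x : Fin n → ℝ) : ℝ :=
  (1 / 2) * ∑ l, ginv x i l *
    (pd j (fun y => g y l k) x + pd k (fun y => g y j l) x - pd l (fun y => g y j k) x)

/-- Covariant derivative ∇_i T_{jk} of a (0,2)-tensor field. -/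
def covDeriv {n : ℕ} (g ginv : (Fin n → ℝ) → Fin n → Fin n → ℝ)
    (T : (Fin n → ℝ) → Fin n → Fin n → ℝ) (i j k : Fin n) (x : Fin n → ℝ) : ℝ :=
  pd i (fun y => T y j k) x
    - ∑ l, christoffel g ginv l i j x * T x l k
    - ∑ l, christoffel g ginv l i k x * T x j l

/-!
Write `Γ_i` for the matrix `(Γ^l_{ia})_{la}`, so that `∇_i T = ∂_i T - Γ_iᵀ T - T Γ_i`. Metric
compatibility `∇_i g = 0` gives `∂_i g⁻¹ = -g⁻¹ Γ_iᵀ - Γ_i g⁻¹`, and hence the Leibniz rule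
`∇_i (S g⁻¹ T) = (∇_i S) g⁻¹ T + S g⁻¹ (∇_i T)`. For `S = T = f` antisymmetric the two summands are
transposes of each other, so `∇_i K_{jk} = A_{ijk} + A_{ikj}` with `A_{ijk} = ((∇_i f) g⁻¹ f)_{jk}`.
The Killing–Yano equation says `A_{ijk} = -A_{jik}`, and the six terms of the cyclic sum cancel in
pairs.
-/

open Filter Matrix Topology

section DifferentiableMatrix

variable {E : Type*} [NormedAddCommGroup E] [NormedSpace ℝ E] {x : E} {ι κ μ : Type*}

lemma differentiableAt_matrix_mul [Fintype κ] {M : E → Matrix ι κ ℝ}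
    {N : E → Matrix κ μ ℝ} (hM : ∀ a b, DifferentiableAt ℝ (fun y => M y a b) x)
    (hN : ∀ a b, DifferentiableAt ℝ (fun y => N y a b) x) (a : ι) (b : μ) :
    DifferentiableAt ℝ (fun y => (M y * N y) a b) x := by
  simp only [mul_apply]
  exact .fun_sum fun c _ => (hM a c).mul (hN c b)

lemma differentiableAt_matrix_det [Fintype ι] [DecidableEq ι] {M : E → Matrix ι ι ℝ}
    (hM : ∀ a b, DifferentiableAt ℝ (fun y => M y a b) x) :
    DifferentiableAt ℝ (fun y => (M y).det) x := by
  simp only [det_apply']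
  refine .fun_sum fun σ _ => .const_mul ?_ _
  exact (HasFDerivAt.finsetProd fun a _ => (hM (σ a) a).hasFDerivAt).differentiableAt

lemma differentiableAt_matrix_adjugate [Fintype ι] [DecidableEq ι]
    {M : E → Matrix ι ι ℝ} (hM : ∀ a b, DifferentiableAt ℝ (fun y => M y a b) x)
    (a b : ι) : DifferentiableAt ℝ (fun y => (M y).adjugate a b) x := by
  simp only [adjugate_apply]
  refine differentiableAt_matrix_det fun c d => ?_
  by_cases hcb : c = b
  · simp [updateRow_apply, hcb]
  · simpa [updateRow_apply, hcb] using hM c d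

lemma differentiableAt_of_matrix_mul_eq_one [Fintype ι] [DecidableEq ι]
    {M N : E → Matrix ι ι ℝ} (hM : ∀ a b, DifferentiableAt ℝ (fun y => M y a b) x)
    (hMN : ∀ᶠ y in 𝓝 x, M y * N y = 1) (a b : ι) :
    DifferentiableAt ℝ (fun y => N y a b) x := by
  have hdet : (M x).det ≠ 0 := (isUnit_det_of_right_inverse hMN.self_of_nhds).ne_zero
  have cramer : (fun y => N y a b) =ᶠ[𝓝 x] fun y => (M y).det⁻¹ * (M y).adjugate a b := by
    filter_upwards [hMN] with y hy
    rw [← inv_eq_right_inv hy, inv_def, Matrix.smul_apply, Ring.inverse_eq_inv', smul_eq_mul]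
  exact (((differentiableAt_matrix_det hM).fun_inv hdet).fun_mul
    (differentiableAt_matrix_adjugate hM a b)).congr_of_eventuallyEq cramer

end DifferentiableMatrix

section PartialDerivative

variable {n : ℕ} {x : Fin n → ℝ} {ι κ μ : Type*}

lemma pd_congr {u v : (Fin n → ℝ) → ℝ} (huv : u =ᶠ[𝓝 x] v) (i : Fin n) :
    pd i u x = pd i v x := by
  rw [pd, pd, huv.fderiv_eq]

lemma pd_const (c : ℝ) (i : Fin n) : pd i (fun _ => c) x = 0 := by
  simp [pd]

lemma pd_neg (u : (Fin n → ℝ) → ℝ) (i : Fin n) : pd i (fun y => -u y) x = -pd i u x := by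
  simp [pd]

lemma pd_mul {u v : (Fin n → ℝ) → ℝ} (hu : DifferentiableAt ℝ u x)
    (hv : DifferentiableAt ℝ v x) (i : Fin n) :
    pd i (fun y => u y * v y) x = pd i u x * v x + u x * pd i v x := by
  simp only [pd, fderiv_fun_mul hu hv, _root_.add_apply, _root_.smul_apply, smul_eq_mul]
  ring

lemma pd_sum [Fintype ι] {u : ι → (Fin n → ℝ) → ℝ} (hu : ∀ c, DifferentiableAt ℝ (u c) x)
    (i : Fin n) : pd i (fun y => ∑ c, u c y) x = ∑ c, pd i (u c) x := by
  simp [pd, fderiv_fun_sum fun c _ => hu c]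

/-- The entrywise partial derivative `∂_i M` of a matrix-valued function. -/
def pdMatrix (i : Fin n) (M : (Fin n → ℝ) → Matrix ι κ ℝ) (x : Fin n → ℝ) : Matrix ι κ ℝ :=
  of fun a b => pd i (fun y => M y a b) x

lemma pdMatrix_congr {M N : (Fin n → ℝ) → Matrix ι κ ℝ} (hMN : M =ᶠ[𝓝 x] N) (i : Fin n) :
    pdMatrix i M x = pdMatrix i N x := by
  ext a b
  exact pd_congr (hMN.mono fun y hy => congrFun₂ hy a b) i

lemma pdMatrix_const (C : Matrix ι κ ℝ) (i : Fin n) : pdMatrix i (fun _ => C) x = 0 := by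
  ext a b
  exact pd_const (C a b) i

lemma pdMatrix_neg (M : (Fin n → ℝ) → Matrix ι κ ℝ) (i : Fin n) :
    pdMatrix i (fun y => -M y) x = -pdMatrix i M x := by
  ext a b
  exact pd_neg (fun y => M y a b) i

lemma pdMatrix_transpose (M : (Fin n → ℝ) → Matrix ι κ ℝ) (i : Fin n) :
    pdMatrix i (fun y => (M y)ᵀ) x = (pdMatrix i M x)ᵀ :=
  rfl

lemma pdMatrix_mul [Fintype κ] {M : (Fin n → ℝ) → Matrix ι κ ℝ} {N : (Fin n → ℝ) → Matrix κ μ ℝ}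
    (hM : ∀ a b, DifferentiableAt ℝ (fun y => M y a b) x)
    (hN : ∀ a b, DifferentiableAt ℝ (fun y => N y a b) x) (i : Fin n) :
    pdMatrix i (fun y => M y * N y) x = pdMatrix i M x * N x + M x * pdMatrix i N x := by
  ext a b
  simp only [pdMatrix, of_apply, mul_apply, Matrix.add_apply]
  rw [pd_sum fun c => (hM a c).fun_mul (hN c b), ← Finset.sum_add_distrib]
  exact Finset.sum_congr rfl fun c _ => pd_mul (hM a c) (hN c b) i

lemma pdMatrix_of_mul_eq_one [Fintype ι] [DecidableEq ι] {M N : (Fin n → ℝ) → Matrix ι ι ℝ}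
    (hM : ∀ a b, DifferentiableAt ℝ (fun y => M y a b) x)
    (hMN : ∀ᶠ y in 𝓝 x, M y * N y = 1) (i : Fin n) :
    pdMatrix i N x = -(N x * pdMatrix i M x * N x) := by
  have hNM : N x * M x = 1 := mul_eq_one_comm.mp hMN.self_of_nhds
  have product_rule : pdMatrix i M x * N x + M x * pdMatrix i N x = 0 := by
    rw [← pdMatrix_mul hM (differentiableAt_of_matrix_mul_eq_one hM hMN), pdMatrix_congr hMN,
      pdMatrix_const]
  calc pdMatrix i N x = N x * (M x * pdMatrix i N x) := by rw [← mul_assoc, hNM, one_mul]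
    _ = -(N x * pdMatrix i M x * N x) := by
      rw [eq_neg_of_add_eq_zero_right product_rule, mul_neg, mul_assoc]

end PartialDerivative

section CovariantDerivative

variable {n : ℕ} {x : Fin n → ℝ} {g ginv : (Fin n → ℝ) → Matrix (Fin n) (Fin n) ℝ}

/-- The connection matrix `Γ_i`, with entry `Γ^l_{ia}` in row `l` and column `a`. -/
def christoffelMatrix (g ginv : (Fin n → ℝ) → Matrix (Fin n) (Fin n) ℝ) (i : Fin n)
    (x : Fin n → ℝ) : Matrix (Fin n) (Fin n) ℝ :=
  of fun l a => christoffel g ginv l i a x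

/-- The covariant derivative `∇_i T` of a (0,2)-tensor field, as the matrix with entries
`∇_i T_{jk}`. -/
def covDerivMatrix (g ginv T : (Fin n → ℝ) → Matrix (Fin n) (Fin n) ℝ) (i : Fin n)
    (x : Fin n → ℝ) : Matrix (Fin n) (Fin n) ℝ :=
  of fun j k => covDeriv g ginv T i j k x

lemma covDerivMatrix_eq (T : (Fin n → ℝ) → Matrix (Fin n) (Fin n) ℝ) (i : Fin n) :
    covDerivMatrix g ginv T i x =
      pdMatrix i T x - (christoffelMatrix g ginv i x)ᵀ * T x
        - T x * christoffelMatrix g ginv i x := by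
  ext j k
  simp only [covDerivMatrix, covDeriv, pdMatrix, christoffelMatrix, of_apply,
    Matrix.sub_apply, mul_apply, transpose_apply, mul_comm (T x j _)]

lemma covDerivMatrix_congr {S T : (Fin n → ℝ) → Matrix (Fin n) (Fin n) ℝ} (hST : S =ᶠ[𝓝 x] T)
    (i : Fin n) : covDerivMatrix g ginv S i x = covDerivMatrix g ginv T i x := by
  rw [covDerivMatrix_eq, covDerivMatrix_eq, pdMatrix_congr hST, hST.self_of_nhds]

lemma covDerivMatrix_neg (T : (Fin n → ℝ) → Matrix (Fin n) (Fin n) ℝ) (i : Fin n) :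
    covDerivMatrix g ginv (fun y => -T y) i x = -covDerivMatrix g ginv T i x := by
  rw [covDerivMatrix_eq, covDerivMatrix_eq, pdMatrix_neg]
  noncomm_ring

lemma covDerivMatrix_transpose (T : (Fin n → ℝ) → Matrix (Fin n) (Fin n) ℝ) (i : Fin n) :
    covDerivMatrix g ginv (fun y => (T y)ᵀ) i x = (covDerivMatrix g ginv T i x)ᵀ := by
  simp only [covDerivMatrix_eq, pdMatrix_transpose, transpose_sub, transpose_mul,
    transpose_transpose]
  abel

lemma transpose_covDerivMatrix_of_antisymm {f : (Fin n → ℝ) → Matrix (Fin n) (Fin n) ℝ}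
    (hanti : ∀ᶠ y in 𝓝 x, (f y)ᵀ = -f y) (i : Fin n) :
    (covDerivMatrix g ginv f i x)ᵀ = -covDerivMatrix g ginv f i x := by
  rw [← covDerivMatrix_transpose, covDerivMatrix_congr hanti, covDerivMatrix_neg]

lemma metric_mul_christoffelMatrix_apply (hinv : g x * ginv x = 1) (i a j : Fin n) :
    (g x * christoffelMatrix g ginv i x) a j =
      (1 / 2) * (pdMatrix i g x a j + pdMatrix j g x i a - pdMatrix a g x i j) := by
  let w : Fin n → ℝ := fun l => pdMatrix i g x l j + pdMatrix j g x i l - pdMatrix l g x i j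
  calc (g x * christoffelMatrix g ginv i x) a j
      = (g x *ᵥ ((1 / 2 : ℝ) • (ginv x *ᵥ w))) a := rfl
    _ = (1 / 2) * w a := by
      rw [mulVec_smul, mulVec_mulVec, hinv, one_mulVec, Pi.smul_apply, smul_eq_mul]

lemma covDerivMatrix_metric (hsymm : ∀ᶠ y in 𝓝 x, (g y).IsSymm) (hinv : g x * ginv x = 1)
    (i : Fin n) : covDerivMatrix g ginv g i x = 0 := by
  have transpose_mul_metric : (christoffelMatrix g ginv i x)ᵀ * g x =
      (g x * christoffelMatrix g ginv i x)ᵀ := by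
    rw [transpose_mul, hsymm.self_of_nhds.eq]
  have pdMatrix_symm : (pdMatrix i g x)ᵀ = pdMatrix i g x := by
    rw [← pdMatrix_transpose, pdMatrix_congr hsymm]
  ext a b
  have pd_symm : pdMatrix i g x b a = pdMatrix i g x a b := congrFun₂ pdMatrix_symm a b
  rw [covDerivMatrix_eq, transpose_mul_metric, Matrix.sub_apply, Matrix.sub_apply,
    transpose_apply, metric_mul_christoffelMatrix_apply hinv,
    metric_mul_christoffelMatrix_apply hinv, pd_symm, Matrix.zero_apply]
  ring

lemma pdMatrix_inverse_metric (hg : ∀ a b, DifferentiableAt ℝ (fun y => g y a b) x)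
    (hsymm : ∀ᶠ y in 𝓝 x, (g y).IsSymm) (hinv : ∀ᶠ y in 𝓝 x, g y * ginv y = 1) (i : Fin n) :
    pdMatrix i ginv x =
      -(ginv x * (christoffelMatrix g ginv i x)ᵀ) - christoffelMatrix g ginv i x * ginv x := by
  have hx : g x * ginv x = 1 := hinv.self_of_nhds
  have hx' : ginv x * g x = 1 := mul_eq_one_comm.mp hx
  have compatible := covDerivMatrix_metric hsymm hx i
  rw [covDerivMatrix_eq, sub_sub, sub_eq_zero] at compatible
  set Γ := christoffelMatrix g ginv i x
  calc pdMatrix i ginv x = -(ginv x * (Γᵀ * g x + g x * Γ) * ginv x) := by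
        rw [pdMatrix_of_mul_eq_one hg hinv, compatible]
    _ = -(ginv x * Γᵀ * (g x * ginv x)) - ginv x * g x * Γ * ginv x := by noncomm_ring
    _ = -(ginv x * Γᵀ) - Γ * ginv x := by rw [hx, hx', mul_one, one_mul]

lemma covDerivMatrix_mul_inverse_metric_mul {S T : (Fin n → ℝ) → Matrix (Fin n) (Fin n) ℝ}
    (hg : ∀ a b, DifferentiableAt ℝ (fun y => g y a b) x)
    (hsymm : ∀ᶠ y in 𝓝 x, (g y).IsSymm) (hinv : ∀ᶠ y in 𝓝 x, g y * ginv y = 1)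
    (hS : ∀ a b, DifferentiableAt ℝ (fun y => S y a b) x)
    (hT : ∀ a b, DifferentiableAt ℝ (fun y => T y a b) x) (i : Fin n) :
    covDerivMatrix g ginv (fun y => S y * ginv y * T y) i x =
      covDerivMatrix g ginv S i x * ginv x * T x
        + S x * ginv x * covDerivMatrix g ginv T i x := by
  have hginv := differentiableAt_of_matrix_mul_eq_one hg hinv
  simp only [covDerivMatrix_eq]
  rw [pdMatrix_mul (differentiableAt_matrix_mul hS hginv) hT, pdMatrix_mul hS hginv,
    pdMatrix_inverse_metric hg hsymm hinv]
  noncomm_ring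

end CovariantDerivative

section KillingYano

variable {n : ℕ} {x : Fin n → ℝ} {g ginv f : (Fin n → ℝ) → Matrix (Fin n) (Fin n) ℝ}

lemma covDerivMatrix_antisymm_square (hg : ∀ a b, DifferentiableAt ℝ (fun y => g y a b) x)
    (hsymm : ∀ᶠ y in 𝓝 x, (g y).IsSymm) (hinv : ∀ᶠ y in 𝓝 x, g y * ginv y = 1)
    (hf : ∀ a b, DifferentiableAt ℝ (fun y => f y a b) x)
    (hanti : ∀ᶠ y in 𝓝 x, (f y)ᵀ = -f y) (i : Fin n) :
    covDerivMatrix g ginv (fun y => f y * ginv y * f y) i x =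
      covDerivMatrix g ginv f i x * ginv x * f x
        + (covDerivMatrix g ginv f i x * ginv x * f x)ᵀ := by
  have ginv_symm : (ginv x)ᵀ = ginv x := by
    rw [← inv_eq_right_inv hinv.self_of_nhds]
    exact hsymm.self_of_nhds.inv
  rw [covDerivMatrix_mul_inverse_metric_mul hg hsymm hinv hf hf, transpose_mul,
    transpose_mul, ginv_symm, hanti.self_of_nhds, transpose_covDerivMatrix_of_antisymm hanti]
  noncomm_ring

lemma covDerivMatrix_mul_apply_swap
    (hKY : ∀ i j k, covDeriv g ginv f i j k x + covDeriv g ginv f j i k x = 0)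
    {ι : Type*} (B : Matrix (Fin n) ι ℝ) (i j : Fin n) (k : ι) :
    (covDerivMatrix g ginv f i x * B) j k = -(covDerivMatrix g ginv f j x * B) i k := by
  simp only [mul_apply, covDerivMatrix, of_apply, ← Finset.sum_neg_distrib, ← neg_mul]
  exact Finset.sum_congr rfl fun c _ => by rw [eq_neg_of_add_eq_zero_left (hKY i j c)]

end KillingYano

lemma sum_sum_mul_mul_eq_matrix_mul {ι κ μ ν R : Type*} [Fintype κ] [Fintype μ]
    [NonUnitalSemiring R] (A : Matrix ι κ R) (B : Matrix κ μ R) (C : Matrix μ ν R)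
    (a : ι) (b : ν) :
    ∑ c, ∑ d, A a c * B c d * C d b = (A * B * C) a b := by
  simp only [mul_apply, Finset.sum_mul]
  exact Finset.sum_comm

theorem killingYano_square_is_killing_general {n : ℕ} {x : Fin n → ℝ}
    {g ginv f : (Fin n → ℝ) → Fin n → Fin n → ℝ}
    (hg : ∀ i j, DifferentiableAt ℝ (fun y => g y i j) x)
    (hgsymm : ∀ᶠ y in 𝓝 x, ∀ i j, g y i j = g y j i)
    (hinv : ∀ᶠ y in 𝓝 x, ∀ i j, ∑ k, g y i k * ginv y k j = if i = j then (1 : ℝ) else 0)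
    (hf : ∀ i j, DifferentiableAt ℝ (fun y => f y i j) x)
    (hfanti : ∀ᶠ y in 𝓝 x, ∀ j k, f y j k = -f y k j)
    (hKY : ∀ i j k, covDeriv g ginv f i j k x + covDeriv g ginv f j i k x = 0)
    (i j k : Fin n) :
    covDeriv g ginv (fun y a b => ∑ c, ∑ d, f y a c * ginv y c d * f y d b) i j k x
      + covDeriv g ginv (fun y a b => ∑ c, ∑ d, f y a c * ginv y c d * f y d b) j k i x
      + covDeriv g ginv (fun y a b => ∑ c, ∑ d, f y a c * ginv y c d * f y d b) k i j x
      = 0 := by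
  have symm : ∀ᶠ y in 𝓝 x, (of (g y)).IsSymm := hgsymm.mono fun y hy => .ext fun a b => hy b a
  have inv : ∀ᶠ y in 𝓝 x, of (g y) * of (ginv y) = 1 := hinv.mono fun y hy => Matrix.ext hy
  have anti : ∀ᶠ y in 𝓝 x, (of (f y))ᵀ = -of (f y) :=
    hfanti.mono fun y hy => Matrix.ext fun a b => hy b a
  have square_eq : (fun y a b => ∑ c, ∑ d, f y a c * ginv y c d * f y d b) =
      fun y => of (f y) * of (ginv y) * of (f y) :=
    funext₃ fun y => sum_sum_mul_mul_eq_matrix_mul (of (f y)) (of (ginv y)) (of (f y))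
  let A (i : Fin n) := covDerivMatrix g ginv f i x * of (ginv x) * of (f x)
  have swap (i j k) : A i j k = -A j i k := by
    simpa only [A, Matrix.mul_assoc] using covDerivMatrix_mul_apply_swap hKY _ i j k
  have leibniz (i j k) :
      covDeriv g ginv (fun y => of (f y) * of (ginv y) * of (f y)) i j k x =
        A i j k + A i k j :=
    congrFun₂ (covDerivMatrix_antisymm_square hg symm inv hf anti i) j k
  rw [square_eq, leibniz, leibniz, leibniz, swap i j k, swap i k j, swap j k i]
  ring

/-- The square K_{ij} := f_{ik} g^{kl} f_{lj} of a Killing–Yano tensor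
satisfies the Killing equation. -/
theorem killingYano_square_is_killing
    (n : ℕ) (V : Set (Fin n → ℝ)) (hV : IsOpen V)
    (g ginv f : (Fin n → ℝ) → Fin n → Fin n → ℝ)
    (hg : ∀ i j, ContDiffOn ℝ (⊤ : ℕ∞) (fun x => g x i j) V)
    (hginv : ∀ i j, ContDiffOn ℝ (⊤ : ℕ∞) (fun x => ginv x i j) V)
    (hgsymm : ∀ x ∈ V, ∀ i j, g x i j = g x j i)
    (hinv : ∀ x ∈ V, ∀ i j, ∑ k, g x i k * ginv x k j = if i = j then (1 : ℝ) else 0)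
    (hf : ∀ i j, ContDiffOn ℝ (⊤ : ℕ∞) (fun x => f x i j) V)
    (hfanti : ∀ x ∈ V, ∀ j k, f x j k = -f x k j)
    (hKY : ∀ x ∈ V, ∀ i j k,
      covDeriv g ginv f i j k x + covDeriv g ginv f j i k x = 0) :
    ∀ x ∈ V, ∀ i j k,
      covDeriv g ginv (fun y a b => ∑ c, ∑ d, f y a c * ginv y c d * f y d b) i j k x
        + covDeriv g ginv (fun y a b => ∑ c, ∑ d, f y a c * ginv y c d * f y d b) j k i x
        + covDeriv g ginv (fun y a b => ∑ c, ∑ d, f y a c * ginv y c d * f y d b) k i j x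
        = 0 := by
  intro x hx
  have hVx : V ∈ 𝓝 x := hV.mem_nhds hx
  have differentiableAt {u : (Fin n → ℝ) → ℝ} (hu : ContDiffOn ℝ (⊤ : ℕ∞) u V) :
      DifferentiableAt ℝ u x := (hu.contDiffAt hVx).differentiableAt (by simp)
  exact killingYano_square_is_killing_general (fun i j => differentiableAt (hg i j))
    (eventually_of_mem hVx hgsymm) (eventually_of_mem hVx hinv)
    (fun i j => differentiableAt (hf i j)) (eventually_of_mem hVx hfanti) (hKY x hx)
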